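/- arXiv:2510.05786 — 3 statements merged into one kernel-verified Lean document; each statement's English description precedes it below -/
import Mathlib

section
/- Let G = (V,E) be a DAMG, R a commutative ring, q : E → R a weight function, A an R-module, w : V → A a function, and z, u ∈ V with z ≠ u. Then the two iterated projections agree: (G^{∖z})^{∖u} = (G^{∖u})^{∖z} (under the canonical identification of edge sets, using acyclicity of G), (q^{∖z})^{∖u} = (q^{∖u})^{∖z}, and (w^{∖z})^{∖u} = (w^{∖u})^{∖z} as functions on V∖{z,u}. -/
open scoped Classical

/-- A directed multigraph: finite sets of vertices/edges with tail and head maps. -/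
structure MGraph (V E : Type*) where
  tl : E → V
  hd : E → V

namespace MGraph

variable {V E R A : Type*}

/-- `G` is a directed acyclic multigraph (DAMG) if it admits a topological ordering,
i.e. a linear (injective) order on the vertices such that tails precede heads. -/
def IsDAMG (G : MGraph V E) : Prop :=
  ∃ ord : V → ℕ, Function.Injective ord ∧ ∀ e : E, ord (G.tl e) < ord (G.hd e)

/-- `G.IsPath x y l` : the list of edges `l` is a directed path from `x` to `y`. -/
def IsPath (G : MGraph V E) : V → V → List E → Prop
  | x, y, [] => x = y
  | x, y, e :: es => G.tl e = x ∧ G.IsPath (G.hd e) y es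

/-- the set `E(x,y)` of edges from `x` to `y` -/
def edges (G : MGraph V E) (x y : V) : Set E := {e | G.tl e = x ∧ G.hd e = y}

/-- there is a directed path from `x` to `y` (possibly trivial) -/
def Reaches (G : MGraph V E) (x y : V) : Prop := ∃ l : List E, G.IsPath x y l

/-- ancestors of `y` (including `y`) -/
def anc (G : MGraph V E) (y : V) : Set V := {x | G.Reaches x y}

/-- descendants of `x` (including `x`) -/
def desc (G : MGraph V E) (x : V) : Set V := {y | G.Reaches x y}

/-- parents of `y` -/
def pa (G : MGraph V E) (y : V) : Set V := {x | ∃ e : E, G.tl e = x ∧ G.hd e = y}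

/-- roots (sources) of `G` -/
def roots (G : MGraph V E) : Set V := {x | G.pa x = ∅}

/-- leaves (sinks) of `G` -/
def leaves (G : MGraph V E) : Set V := {x | ∀ e : E, G.tl e ≠ x}

/-- `π(x,y)` : the number of directed paths from `x` to `y` -/
noncomputable def nPaths (G : MGraph V E) (x y : V) : ℕ :=
  {l : List E | G.IsPath x y l}.ncard

/-- `π(y)` : the number of directed paths from roots to `y` -/
noncomputable def nPathsRt (G : MGraph V E) (y : V) : ℕ :=
  ∑ᶠ r ∈ G.roots, G.nPaths r y

/-- pairwise weight `q(x|y) := Σ_{e ∈ E(x,y)} q(e)` -/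
noncomputable def pw [AddCommMonoid R] (G : MGraph V E) (q : E → R) (x y : V) : R :=
  ∑ᶠ e ∈ G.edges x y, q e

/-- a weight function is normalized if pairwise weights into any non-root sum to 1 -/
def Normalized [CommRing R] (G : MGraph V E) (q : E → R) : Prop :=
  ∀ y : V, y ∉ G.roots → (∑ᶠ x : V, G.pw q x y) = 1

/-- `w` is the Möbius transform (synergy function) of `v` w.r.t. `G` -/
def IsMoebiusTransform [AddCommGroup A] (G : MGraph V E) (v w : V → A) : Prop :=
  ∀ x : V, w x = v x - ∑ᶠ y ∈ G.anc x \ {x}, w y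

/-- `μ` is the Möbius function of `G` -/
def IsMoebiusFunction (G : MGraph V E) (μ : V → V → ℤ) : Prop :=
  (∀ x y : V, x ∉ G.anc y → μ x y = 0) ∧
  (∀ x : V, μ x x = 1) ∧
  (∀ x y : V, x ∈ G.anc y → x ≠ y →
    μ x y = -(∑ᶠ z ∈ (G.desc x ∩ G.anc y) \ {y}, μ x z))

/-- `s` is the total path weight function of the edge weight function `q` -/
def IsTotalWeight [CommRing R] (G : MGraph V E) (q : E → R) (s : V → V → R) : Prop :=
  (∀ x y : V, y ∉ G.desc x → s x y = 0) ∧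
  (∀ x : V, s x x = 1) ∧
  (∀ x y : V, y ∈ G.desc x → y ≠ x → s x y = ∑ᶠ z ∈ G.pa y, s x z * G.pw q z y)

/-- `τ : V → R` is the extension of a root weight function via the recursion
`τ(y) = Σ_{z ∈ Pa(y)} τ(z)·ς(z,y)` for non-roots `y` -/
def IsRootExtension [CommRing R] (G : MGraph V E) (ς : E → R) (τ : V → R) : Prop :=
  ∀ y : V, y ∉ G.roots → τ y = ∑ᶠ z ∈ G.pa y, τ z * G.pw ς z y

/-- the list of vertices visited by a path starting at `x` -/
def pathVerts (G : MGraph V E) (x : V) (l : List E) : List V := x :: l.map G.hd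

/-- `X` is a horizontal subset of `G` : every directed path from a root to a leaf
contains exactly one element of `X` -/
def Horizontal (G : MGraph V E) (X : Set V) : Prop :=
  ∀ r ∈ G.roots, ∀ lf ∈ G.leaves, ∀ p : List E, G.IsPath r lf p →
    (G.pathVerts r p).countP (fun v => decide (v ∈ X)) = 1

/-- the path uniform weight function `q_G(e) := π(t(e))/π(h(e))` -/
noncomputable def pathUniform (G : MGraph V E) : E → ℚ :=
  fun e => (G.nPathsRt (G.tl e) : ℚ) / (G.nPathsRt (G.hd e) : ℚ)

/-- the unanimity value function centred at `y` -/
noncomputable def zeta [CommRing R] (G : MGraph V E) (y : V) : V → R :=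
  fun x => if x ∈ G.desc y then (1 : R) else 0

/-! ### Projection onto the complement of a single element -/

/-- the edge type of the projection `G^{∖z}` :
old edges avoiding `z`, together with a new edge for every pair of edges through `z` -/
def proj1E (G : MGraph V E) (z : V) : Type _ :=
  {e : E // G.tl e ≠ z ∧ G.hd e ≠ z} ⊕
  {p : E × E // G.hd p.1 = z ∧ G.tl p.2 = z ∧ G.tl p.1 ≠ z ∧ G.hd p.2 ≠ z}

/-- the projection `G^{∖z}` of `G` onto the complement of `z` -/
def proj1 (G : MGraph V E) (z : V) : MGraph {x : V // x ≠ z} (G.proj1E z) where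
  tl := Sum.elim (fun e => ⟨G.tl e.1, e.2.1⟩) (fun p => ⟨G.tl p.1.1, p.2.2.2.1⟩)
  hd := Sum.elim (fun e => ⟨G.hd e.1, e.2.2⟩) (fun p => ⟨G.hd p.1.2, p.2.2.2.2⟩)

/-- the projected weight function `q^{∖z}` -/
def proj1Q [CommRing R] (G : MGraph V E) (z : V) (q : E → R) : G.proj1E z → R :=
  Sum.elim (fun e => q e.1) (fun p => q p.1.1 * q p.1.2)

/-- the single-element projection `w^{∖z}(x) := w(x) + q(x|z)·w(z)` of a synergy function -/
noncomputable def wProjOne [CommRing R] [AddCommGroup A] [Module R A]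
    (G : MGraph V E) (q : E → R) (w : V → A) (z : V) : {x : V // x ≠ z} → A :=
  fun x => w x.1 + G.pw q x.1 z • w z

/-! ### Projection onto the complement of a subset -/

/-- consecutive edges of the list compose -/
def IsChain (G : MGraph V E) : List E → Prop
  | [] => True
  | [_] => True
  | e :: e' :: es => G.hd e = G.tl e' ∧ G.IsChain (e' :: es)

/-- the interior vertices of a path (all visited vertices except the endpoints) -/
def interior (G : MGraph V E) : List E → List V
  | [] => []
  | [_] => []
  | e :: e' :: es => G.hd e :: G.interior (e' :: es)

/-- an edge of the projection `G^{∖S}` : a nonempty directed path of `G` whose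
interior vertices lie in `S` and whose endpoints lie outside `S`
(iterating `E^{∖z}(x,y) := E(x,y) ⊔ (E(x,z) × E(z,y))` over the elements of `S`) -/
structure ProjEdge (G : MGraph V E) (S : Set V) where
  first : E
  rest : List E
  chain : G.IsChain (first :: rest)
  tl_notin : G.tl first ∉ S
  hd_notin : G.hd ((first :: rest).getLast (List.cons_ne_nil _ _)) ∉ S
  interior_mem : ∀ v ∈ G.interior (first :: rest), v ∈ S

/-- the projection `G^{∖S}` of `G` onto the complement of the subset `S` -/
def projG (G : MGraph V E) (S : Set V) : MGraph {x : V // x ∉ S} (G.ProjEdge S) where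
  tl := fun p => ⟨G.tl p.first, p.tl_notin⟩
  hd := fun p => ⟨G.hd ((p.first :: p.rest).getLast (List.cons_ne_nil _ _)), p.hd_notin⟩

/-- the projected weight function `q^{∖S}` (weights multiply along collapsed paths) -/
def projQ [CommRing R] (G : MGraph V E) (S : Set V) (q : E → R) :
    G.ProjEdge S → R :=
  fun p => ((p.first :: p.rest).map q).prod

/-! ### Iterated one-element projections of pairwise weights and synergy functions -/

/-- one projection step on pairwise weights: `q^{∖z}(x|y) = q(x|y) + q(x|z)·q(z|y)` -/
def pwStep [CommRing R] (Q : V → V → R) (z : V) : V → V → R :=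
  fun x y => Q x y + Q x z * Q z y

/-- one projection step on a synergy function: `w^{∖z}(x) = w(x) + q(x|z)·w(z)` -/
def wStep [CommRing R] [AddCommGroup A] [Module R A]
    (Q : V → V → R) (w : V → A) (z : V) : V → A :=
  fun x => w x + Q x z • w z

/-- iterated one-element projections along a list of vertices -/
def projIter [CommRing R] [AddCommGroup A] [Module R A] :
    List V → (V → V → R) → (V → A) → ((V → V → R) × (V → A))
  | [], Q, w => (Q, w)
  | z :: zs, Q, w => projIter zs (pwStep Q z) (wStep Q w z)

/-! ### Subgraph on a subset of vertices -/

/-- edges of `G` with both endpoints in `S` -/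
def subE (G : MGraph V E) (S : Set V) : Type _ := {e : E // G.tl e ∈ S ∧ G.hd e ∈ S}

/-- the subgraph of `G` on the vertex subset `S` -/
def subgraph (G : MGraph V E) (S : Set V) : MGraph ↥S (G.subE S) where
  tl := fun e => ⟨G.tl e.1, e.2.1⟩
  hd := fun e => ⟨G.hd e.1, e.2.2⟩

/-- the canonical identification `(V∖{z})∖{u} ≃ (V∖{u})∖{z}` -/
def swapCompl (z u : V) (hzu : z ≠ u) :
    {y : {x : V // x ≠ z} // y ≠ ⟨u, Ne.symm hzu⟩} ≃
      {y : {x : V // x ≠ u} // y ≠ ⟨z, hzu⟩} where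
  toFun y := ⟨⟨y.1.1, fun h => y.2 (Subtype.ext h)⟩, fun h => y.1.2 (congrArg Subtype.val h)⟩
  invFun y := ⟨⟨y.1.1, fun h => y.2 (Subtype.ext h)⟩, fun h => y.1.2 (congrArg Subtype.val h)⟩
  left_inv y := rfl
  right_inv y := rfl

end MGraph


/-!
Projecting out `z` replaces `E(x,y)` by `E(x,y) ⊔ E(x,z) × E(z,y)`, and on pairwise weights this
reads `q^{∖z}(x|y) = q(x|y) + q(x|z) q(z|y)`. Projecting out `u` as well produces, besides the five
summands that `z` and `u` enter symmetrically, only `E(x,z) × E(z,u) × E(u,z) × E(z,y)`. Acyclicity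
makes this one empty, and likewise kills the asymmetric term `q(x|z) q(z|u) q(u|z) w(z)` in the
iterated projection of the synergy function.
-/

namespace MGraph

section Detours

variable {A B C B' C' D D' R : Type*}

/-- The weight on `A ⊕ B × C`, whose elements are thought of as direct edges and as detours through
a vertex: weights multiply along a detour. It models `q^{∖z}` on `E(x,y) ⊔ E(x,z) × E(z,y)`. -/
def detourWeight [Mul R] (a : A → R) (b : B → R) (c : C → R) : A ⊕ B × C → R :=
  Sum.elim a fun p => b p.1 * c p.2

theorem sum_detourWeight [NonUnitalNonAssocSemiring R] [Fintype A] [Fintype B] [Fintype C]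
    (a : A → R) (b : B → R) (c : C → R) :
    ∑ i, detourWeight a b c i = ∑ i, a i + (∑ j, b j) * ∑ k, c k := by
  simp [detourWeight, Fintype.sum_sum_type, Fintype.sum_prod_type, Finset.sum_mul_sum]

/-- The exchange of the order in which two vertices `z` and `u` are projected out, on the edges from
`x` to `y`. Here `A = E(x,y)`, `B = E(x,z)`, `C = E(z,y)`, `B' = E(x,u)`, `C' = E(u,y)`,
`D = E(z,u)` and `D' = E(u,z)`. -/
def swapDetours (h : IsEmpty D ∨ IsEmpty D') :
    (A ⊕ B × C) ⊕ (B' ⊕ B × D) × (C' ⊕ D' × C) → (A ⊕ B' × C') ⊕ (B ⊕ B' × D') × (C ⊕ D × C')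
  | .inl (.inl a) => .inl (.inl a)
  | .inl (.inr (b, c)) => .inr (.inl b, .inl c)
  | .inr (.inl b', .inl c') => .inl (.inr (b', c'))
  | .inr (.inl b', .inr (d', c)) => .inr (.inr (b', d'), .inl c)
  | .inr (.inr (b, d), .inl c') => .inr (.inl b, .inr (d, c'))
  | .inr (.inr (_, d), .inr (d', _)) => (isEmpty_prod.2 h).elim (d, d')

theorem swapDetours_swapDetours (h : IsEmpty D ∨ IsEmpty D')
    (i : (A ⊕ B × C) ⊕ (B' ⊕ B × D) × (C' ⊕ D' × C)) :
    swapDetours h.symm (swapDetours h i) = i := by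
  rcases i with (a | ⟨b, c⟩) | ⟨b' | ⟨b, d⟩, c' | ⟨d', c⟩⟩
  case inr.inr.inr => exact (isEmpty_prod.2 h).elim (d, d')
  all_goals rfl

/-- `swapDetours` as an equivalence; its inverse is `swapDetours` with `z` and `u` exchanged. -/
def swapDetoursEquiv (h : IsEmpty D ∨ IsEmpty D') :
    (A ⊕ B × C) ⊕ (B' ⊕ B × D) × (C' ⊕ D' × C) ≃
      (A ⊕ B' × C') ⊕ (B ⊕ B' × D') × (C ⊕ D × C') where
  toFun := swapDetours h
  invFun := swapDetours h.symm
  left_inv := swapDetours_swapDetours h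
  right_inv := swapDetours_swapDetours h.symm

theorem detourWeight_swapDetoursEquiv [Semigroup R] (h : IsEmpty D ∨ IsEmpty D') (a : A → R)
    (b : B → R) (c : C → R) (b' : B' → R) (c' : C' → R) (d : D → R) (d' : D' → R)
    (i : (A ⊕ B × C) ⊕ (B' ⊕ B × D) × (C' ⊕ D' × C)) :
    detourWeight (detourWeight a b' c') (detourWeight b b' d') (detourWeight c d c')
        (swapDetoursEquiv h i) =
      detourWeight (detourWeight a b c) (detourWeight b' b d) (detourWeight c' d' c) i := by
  rcases i with (i | ⟨j, k⟩) | ⟨j' | ⟨j, l⟩, k' | ⟨l', k⟩⟩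
  case inr.inl.inr => exact mul_assoc _ _ _
  case inr.inr.inl => exact (mul_assoc _ _ _).symm
  case inr.inr.inr => exact (isEmpty_prod.2 h).elim (l, l')
  all_goals rfl

end Detours

section EdgeSets

variable {V E V' E' : Type*} {G : MGraph V E} {G' : MGraph V' E'}

theorem IsDAMG.isEmpty_edges_or_isEmpty_edges (hG : G.IsDAMG) (x y : V) :
    IsEmpty (G.edges x y) ∨ IsEmpty (G.edges y x) := by
  obtain ⟨ord, -, tl_lt_hd⟩ := hG
  have ord_lt {x y : V} (e : G.edges x y) : ord x < ord y := by
    simpa only [e.2.1, e.2.2] using tl_lt_hd e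
  rw [← isEmpty_prod]
  exact ⟨fun p => (ord_lt p.1).asymm (ord_lt p.2)⟩

variable (G) in
/-- The decomposition of the edges of `G` according to their endpoints. -/
def edgeEquivSigmaEdges : E ≃ Σ p : V × V, G.edges p.1 p.2 where
  toFun e := ⟨(G.tl e, G.hd e), e, rfl, rfl⟩
  invFun s := s.2
  left_inv _ := rfl
  right_inv := by
    rintro ⟨⟨x, y⟩, e, hx, hy⟩
    obtain rfl : G.tl e = x := hx
    obtain rfl : G.hd e = y := hy
    rfl

/-- The bijection of edges glued from bijections `E(x,y) ≃ E'(σ x, σ y)`. -/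
def edgeEquivOfEdgesEquiv (σ : V ≃ V') (ε : ∀ x y, G.edges x y ≃ G'.edges (σ x) (σ y)) : E ≃ E' :=
  G.edgeEquivSigmaEdges.trans <|
    (Equiv.sigmaCongr (σ.prodCongr σ) fun p => ε p.1 p.2).trans G'.edgeEquivSigmaEdges.symm

theorem edgeEquivOfEdgesEquiv_apply (σ : V ≃ V')
    (ε : ∀ x y, G.edges x y ≃ G'.edges (σ x) (σ y)) (e : E) :
    edgeEquivOfEdgesEquiv σ ε e = ε (G.tl e) (G.hd e) ⟨e, rfl, rfl⟩ :=
  rfl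

theorem tl_edgeEquivOfEdgesEquiv (σ : V ≃ V')
    (ε : ∀ x y, G.edges x y ≃ G'.edges (σ x) (σ y)) (e : E) :
    G'.tl (edgeEquivOfEdgesEquiv σ ε e) = σ (G.tl e) :=
  (ε (G.tl e) (G.hd e) ⟨e, rfl, rfl⟩).2.1

theorem hd_edgeEquivOfEdgesEquiv (σ : V ≃ V')
    (ε : ∀ x y, G.edges x y ≃ G'.edges (σ x) (σ y)) (e : E) :
    G'.hd (edgeEquivOfEdgesEquiv σ ε e) = σ (G.hd e) :=
  (ε (G.tl e) (G.hd e) ⟨e, rfl, rfl⟩).2.2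

end EdgeSets

section Projection

variable {V E R : Type*} [CommRing R] (G : MGraph V E)

/-- The identification `E^{∖z}(x,y) ≃ E(x,y) ⊔ E(x,z) × E(z,y)`. -/
def edgesProj1Equiv (z : V) (x y : {v : V // v ≠ z}) :
    (G.proj1 z).edges x y ≃ G.edges x y ⊕ G.edges x z × G.edges z y where
  toFun
    | ⟨.inl e, h⟩ => .inl ⟨e, congrArg Subtype.val h.1, congrArg Subtype.val h.2⟩
    | ⟨.inr p, h⟩ => .inr (⟨p.1.1, congrArg Subtype.val h.1, p.2.1⟩,
        ⟨p.1.2, p.2.2.1, congrArg Subtype.val h.2⟩)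
  invFun
    | .inl e => ⟨.inl ⟨e, ne_of_eq_of_ne e.2.1 x.2, ne_of_eq_of_ne e.2.2 y.2⟩,
        Subtype.ext e.2.1, Subtype.ext e.2.2⟩
    | .inr (e, f) => ⟨.inr ⟨(e, f), e.2.2, f.2.1, ne_of_eq_of_ne e.2.1 x.2,
        ne_of_eq_of_ne f.2.2 y.2⟩, Subtype.ext e.2.1, Subtype.ext f.2.2⟩
  left_inv := by rintro ⟨_ | _, _⟩ <;> rfl
  right_inv := by rintro (_ | _) <;> rfl

/-- The weight `q^{∖z}`, transported to `E(x,y) ⊔ E(x,z) × E(z,y)`. -/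
def edgesDetourWeight {M : Type*} [Mul M] (q : E → M) (z x y : V) :
    G.edges x y ⊕ G.edges x z × G.edges z y → M :=
  detourWeight (Set.domRestrict _ q) (Set.domRestrict _ q) (Set.domRestrict _ q)

theorem edgesDetourWeight_edgesProj1Equiv (q : E → R) (z : V) (x y : {v : V // v ≠ z})
    (e : (G.proj1 z).edges x y) :
    G.edgesDetourWeight q z x y (G.edgesProj1Equiv z x y e) = G.proj1Q z q e := by
  rcases e with ⟨_ | _, _⟩ <;> rfl

/-- The identification of `(E^{∖z})^{∖u}(x,y)` obtained from two uses of `edgesProj1Equiv`. -/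
def edgesProj1Proj1Equiv (z : V) (u : {v : V // v ≠ z}) (x y : {v : {v : V // v ≠ z} // v ≠ u}) :
    ((G.proj1 z).proj1 u).edges x y ≃
      (G.edges x y ⊕ G.edges x z × G.edges z y) ⊕
        (G.edges x u ⊕ G.edges x z × G.edges z u) × (G.edges u y ⊕ G.edges u z × G.edges z y) :=
  ((G.proj1 z).edgesProj1Equiv u x y).trans <|
    (G.edgesProj1Equiv z x y).sumCongr <|
      (G.edgesProj1Equiv z x u).prodCongr (G.edgesProj1Equiv z u y)

theorem detourWeight_edgesProj1Proj1Equiv (q : E → R) (z : V) (u : {v : V // v ≠ z})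
    (x y : {v : {v : V // v ≠ z} // v ≠ u}) (e : ((G.proj1 z).proj1 u).edges x y) :
    detourWeight (G.edgesDetourWeight q z x y) (G.edgesDetourWeight q z x u)
        (G.edgesDetourWeight q z u y) (G.edgesProj1Proj1Equiv z u x y e) =
      (G.proj1 z).proj1Q u (G.proj1Q z q) e := by
  rw [← edgesDetourWeight_edgesProj1Equiv]
  simp only [edgesProj1Proj1Equiv, Equiv.trans_apply]
  rcases (G.proj1 z).edgesProj1Equiv u x y e with f | ⟨f, f'⟩
  · exact G.edgesDetourWeight_edgesProj1Equiv q z x y f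
  · exact congrArg₂ (· * ·) (G.edgesDetourWeight_edgesProj1Equiv q z x u f)
      (G.edgesDetourWeight_edgesProj1Equiv q z u y f')

variable {G} {z u : V}

/-- The canonical identification of `(E^{∖z})^{∖u}(x,y)` with `(E^{∖u})^{∖z}(x,y)`. -/
def edgesProj1Proj1Swap (hzu : z ≠ u) (h : IsEmpty (G.edges z u) ∨ IsEmpty (G.edges u z))
    (x y : {v : {v : V // v ≠ z} // v ≠ ⟨u, hzu.symm⟩}) :
    ((G.proj1 z).proj1 ⟨u, hzu.symm⟩).edges x y ≃
      ((G.proj1 u).proj1 ⟨z, hzu⟩).edges (swapCompl z u hzu x) (swapCompl z u hzu y) :=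
  (G.edgesProj1Proj1Equiv z ⟨u, hzu.symm⟩ x y).trans <|
    (swapDetoursEquiv h).trans
      (G.edgesProj1Proj1Equiv u ⟨z, hzu⟩ (swapCompl z u hzu x) (swapCompl z u hzu y)).symm

theorem proj1Q_proj1Q_edgesProj1Proj1Swap (hzu : z ≠ u)
    (h : IsEmpty (G.edges z u) ∨ IsEmpty (G.edges u z)) (q : E → R)
    (x y : {v : {v : V // v ≠ z} // v ≠ ⟨u, hzu.symm⟩})
    (e : ((G.proj1 z).proj1 ⟨u, hzu.symm⟩).edges x y) :
    (G.proj1 u).proj1Q ⟨z, hzu⟩ (G.proj1Q u q) (edgesProj1Proj1Swap hzu h x y e) =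
      (G.proj1 z).proj1Q ⟨u, hzu.symm⟩ (G.proj1Q z q) e := by
  rw [← detourWeight_edgesProj1Proj1Equiv, ← detourWeight_edgesProj1Proj1Equiv]
  have swap_eq : G.edgesProj1Proj1Equiv u ⟨z, hzu⟩ _ _ (edgesProj1Proj1Swap hzu h x y e) =
      swapDetoursEquiv h (G.edgesProj1Proj1Equiv z ⟨u, hzu.symm⟩ x y e) :=
    Equiv.apply_symm_apply _ _
  rw [swap_eq]
  exact detourWeight_swapDetoursEquiv (R := R) h _ _ _ _ _ _ _ _

end Projection

section PairwiseWeights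

variable {V E R A : Type*} [CommRing R] [AddCommGroup A] [Module R A] {G : MGraph V E} {z u : V}

theorem pw_eq_sum_edges {M : Type*} [AddCommMonoid M] (G : MGraph V E) (q : E → M) (x y : V)
    [Fintype (G.edges x y)] : G.pw q x y = ∑ e, (G.edges x y).domRestrict q e := by
  rw [pw, ← finsum_set_coe_eq_finsum_mem, finsum_eq_sum_of_fintype]
  rfl

theorem pw_eq_zero_of_isEmpty {M : Type*} [AddCommMonoid M] (q : E → M) {x y : V}
    (h : IsEmpty (G.edges x y)) : G.pw q x y = 0 := by
  rw [pw, Set.isEmpty_coe_sort.1 h, finsum_mem_empty]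

theorem pw_mul_pw_eq_zero {M : Type*} [NonUnitalNonAssocSemiring M]
    (h : IsEmpty (G.edges z u) ∨ IsEmpty (G.edges u z)) (q : E → M) :
    G.pw q z u * G.pw q u z = 0 := by
  rcases h with h | h <;> simp [pw_eq_zero_of_isEmpty q h]

theorem pw_proj1 [∀ x y, Finite (G.edges x y)] (q : E → R) (x y : {v : V // v ≠ z}) :
    (G.proj1 z).pw (G.proj1Q z q) x y = G.pw q x y + G.pw q x z * G.pw q z y := by
  have (x y : V) : Fintype (G.edges x y) := Fintype.ofFinite _
  have : Fintype ((G.proj1 z).edges x y) := Fintype.ofEquiv _ (G.edgesProj1Equiv z x y).symm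
  calc (G.proj1 z).pw (G.proj1Q z q) x y
    _ = ∑ e, G.edgesDetourWeight q z x y (G.edgesProj1Equiv z x y e) := by
      simp only [pw_eq_sum_edges, edgesDetourWeight_edgesProj1Equiv, Set.domRestrict_apply]
    _ = ∑ i, G.edgesDetourWeight q z x y i := Equiv.sum_comp _ _
    _ = G.pw q x y + G.pw q x z * G.pw q z y := by
      simp only [edgesDetourWeight, sum_detourWeight, pw_eq_sum_edges]

theorem wProjOne_wProjOne_apply [∀ x y, Finite (G.edges x y)]
    (h : IsEmpty (G.edges z u) ∨ IsEmpty (G.edges u z)) (q : E → R) (w : V → A) (huz : u ≠ z)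
    (x : {v : {v : V // v ≠ z} // v ≠ ⟨u, huz⟩}) :
    wProjOne (G.proj1 z) (G.proj1Q z q) (wProjOne G q w z) ⟨u, huz⟩ x =
      w x + (G.pw q x z + G.pw q x u * G.pw q u z) • w z +
        (G.pw q x u + G.pw q x z * G.pw q z u) • w u := by
  have cycle : G.pw q x z * G.pw q z u * G.pw q u z = 0 := by
    rw [mul_assoc, pw_mul_pw_eq_zero h, mul_zero]
  simp only [wProjOne, pw_proj1, smul_add, smul_smul, add_mul, cycle, add_zero, add_smul]
  abel

end PairwiseWeights

end MGraph

theorem projections_commute_general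
    {V E R A : Type*} [CommRing R] [AddCommGroup A] [Module R A]
    (G : MGraph V E) [∀ x y, Finite (G.edges x y)]
    (q : E → R) (w : V → A) (z u : V) (hzu : z ≠ u)
    (h : IsEmpty (G.edges z u) ∨ IsEmpty (G.edges u z)) :
    (∃ φ : ((G.proj1 z).proj1E ⟨u, Ne.symm hzu⟩) ≃ ((G.proj1 u).proj1E ⟨z, hzu⟩),
      (∀ e, ((G.proj1 u).proj1 ⟨z, hzu⟩).tl (φ e)
          = MGraph.swapCompl z u hzu (((G.proj1 z).proj1 ⟨u, Ne.symm hzu⟩).tl e)) ∧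
      (∀ e, ((G.proj1 u).proj1 ⟨z, hzu⟩).hd (φ e)
          = MGraph.swapCompl z u hzu (((G.proj1 z).proj1 ⟨u, Ne.symm hzu⟩).hd e)) ∧
      (∀ e, (G.proj1 u).proj1Q ⟨z, hzu⟩ ((G.proj1Q u q)) (φ e)
          = (G.proj1 z).proj1Q ⟨u, Ne.symm hzu⟩ ((G.proj1Q z q)) e)) ∧
    (∀ (x : V) (hxz : x ≠ z) (hxu : x ≠ u),
      MGraph.wProjOne (G.proj1 z) (G.proj1Q z q) (MGraph.wProjOne G q w z)
          ⟨u, Ne.symm hzu⟩ ⟨⟨x, hxz⟩, fun h => hxu (congrArg Subtype.val h)⟩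
        = MGraph.wProjOne (G.proj1 u) (G.proj1Q u q) (MGraph.wProjOne G q w u)
          ⟨z, hzu⟩ ⟨⟨x, hxu⟩, fun h => hxz (congrArg Subtype.val h)⟩) := by
  let swap := MGraph.edgesProj1Proj1Swap hzu h
  refine ⟨⟨MGraph.edgeEquivOfEdgesEquiv (MGraph.swapCompl z u hzu) swap,
    MGraph.tl_edgeEquivOfEdgesEquiv _ swap, MGraph.hd_edgeEquivOfEdgesEquiv _ swap,
    fun e => ?_⟩, fun x hxz hxu => ?_⟩
  · rw [MGraph.edgeEquivOfEdgesEquiv_apply]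
    exact MGraph.proj1Q_proj1Q_edgesProj1Proj1Swap hzu h q _ _ _
  · rw [MGraph.wProjOne_wProjOne_apply h, MGraph.wProjOne_wProjOne_apply h.symm]
    exact add_right_comm _ _ _

/-- **Projections commute.**
For a DAMG `G`, a weight function `q`, a synergy function `w`, and distinct
`z, u ∈ V`: the iterated projections `(G^{∖z})^{∖u}` and `(G^{∖u})^{∖z}` agree
under the canonical identification (using acyclicity of `G`): there is a
bijection of their edge sets preserving tails, heads (via the canonical
identification of vertex sets) and the iterated projected weights
`(q^{∖z})^{∖u} = (q^{∖u})^{∖z}`; moreover `(w^{∖z})^{∖u} = (w^{∖u})^{∖z}` as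
functions on `V∖{z,u}`. -/
theorem projections_commute
    {V E R A : Type*} [Finite V] [Finite E] [CommRing R] [AddCommGroup A] [Module R A]
    (G : MGraph V E) (hG : G.IsDAMG)
    (q : E → R) (w : V → A) (z u : V) (hzu : z ≠ u) :
    (∃ φ : ((G.proj1 z).proj1E ⟨u, Ne.symm hzu⟩) ≃ ((G.proj1 u).proj1E ⟨z, hzu⟩),
      (∀ e, ((G.proj1 u).proj1 ⟨z, hzu⟩).tl (φ e)
          = MGraph.swapCompl z u hzu (((G.proj1 z).proj1 ⟨u, Ne.symm hzu⟩).tl e)) ∧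
      (∀ e, ((G.proj1 u).proj1 ⟨z, hzu⟩).hd (φ e)
          = MGraph.swapCompl z u hzu (((G.proj1 z).proj1 ⟨u, Ne.symm hzu⟩).hd e)) ∧
      (∀ e, (G.proj1 u).proj1Q ⟨z, hzu⟩ ((G.proj1Q u q)) (φ e)
          = (G.proj1 z).proj1Q ⟨u, Ne.symm hzu⟩ ((G.proj1Q z q)) e)) ∧
    (∀ (x : V) (hxz : x ≠ z) (hxu : x ≠ u),
      MGraph.wProjOne (G.proj1 z) (G.proj1Q z q) (MGraph.wProjOne G q w z)
          ⟨u, Ne.symm hzu⟩ ⟨⟨x, hxz⟩, fun h => hxu (congrArg Subtype.val h)⟩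
        = MGraph.wProjOne (G.proj1 u) (G.proj1Q u q) (MGraph.wProjOne G q w u)
          ⟨z, hzu⟩ ⟨⟨x, hxu⟩, fun h => hxz (congrArg Subtype.val h)⟩) :=
  projections_commute_general G q w z u hzu (hG.isEmpty_edges_or_isEmpty_edges z u)
end

section
/- Let G = (V,E) be a DAMG, R a commutative ring, q : E → R a weight function with total path weight function s, A an R-module, v : V → A a value function with Möbius transform w = v'. Let x ∈ V be fixed and S ⊆ V any subset with Desc(x) ∩ S = Desc(x)∖{x}. Then the iterated projection of w onto V∖S satisfies w^{∖S}(x) = Σ_{y ∈ V} s(x|y) · w(y) = Σ_{y ∈ Desc(x)} s(x|y) · w(y). -/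
open scoped Classical

/-!
Projecting out a vertex `z` replaces the pairwise weights `Q` by `Q + Q(·|z) Q(z|·)` and the
function `w` by `w + Q(·|z) w(z)`.
If a row vector `t` satisfies `t(z) = Σ_y t(y) Q(y|z)`, then the value `t(z) w(z)` lost by erasing
the entry of `t` at `z` is exactly what the projection adds to the other values, so
`Σ_y t(y) w(y)` does not change. The same identity, applied to the columns of `Q`, shows that the
equation for `t` survives at the vertices which are still to be projected out. Now `t = s(x|·)`
satisfies it at every `z ≠ x`, by the recursion for `s`, and once every proper descendant of `x`
is projected out only the entry `s(x|x) = 1` is left.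
-/

open Finsupp Function

section Finsum

variable {α R A : Type*}

theorem finsum_mem_eq_finsum_of_support_subset [AddCommMonoid A] {f : α → A} {s : Set α}
    (h : support f ⊆ s) : ∑ᶠ a ∈ s, f a = ∑ᶠ a, f a := by
  rw [finsum_mem_def, Set.indicator_eq_self.2 h]

theorem linearCombination_eq_finsum [Semiring R] [AddCommMonoid A] [Module R A]
    (f : α → A) (t : α →₀ R) : linearCombination R f t = ∑ᶠ a, t a • f a := by
  refine (finsum_eq_sum_of_support_subset _ fun a ha => ?_).symm
  exact mem_support_iff.2 (left_ne_zero_of_smul ha)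

end Finsum

namespace MGraph

variable {V E R A : Type*} [CommRing R] [AddCommGroup A] [Module R A]

section Projection

theorem linearCombination_wStep_erase {Q : V → V → R} {z : V} {t : V →₀ R} (hz : Q z z = 0)
    (ht : linearCombination R (Q · z) t = t z) (w : V → A) :
    linearCombination R (wStep Q w z) (t.erase z) = linearCombination R w t := by
  have hsplit : ∀ a : V →₀ R, linearCombination R (wStep Q w z) a =
      linearCombination R w a + linearCombination R (Q · z) a • w z := fun a => by
    simp only [linearCombination_apply, wStep, Finsupp.sum, smul_add, Finset.sum_add_distrib,
      Finset.sum_smul, smul_assoc]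
  have hloss : linearCombination R (wStep Q w z) (single z (t z)) = t z • w z := by
    simp [wStep, hz]
  rw [erase_eq_sub_single, map_sub, hsplit, ht, hloss, add_sub_cancel_right]

variable {α : Type*} [Preorder α] {ord : V → α} {Q : V → V → R}

theorem lt_of_pwStep_ne_zero (hQ : ∀ a b, Q a b ≠ 0 → ord a < ord b) (z a b : V)
    (h : pwStep Q z a b ≠ 0) : ord a < ord b := by
  by_cases hab : Q a b = 0
  · have hmul : Q a z * Q z b ≠ 0 := by simpa [pwStep, hab] using h
    exact (hQ a z (left_ne_zero_of_mul hmul)).trans (hQ z b (right_ne_zero_of_mul hmul))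
  · exact hQ a b hab

theorem linearCombination_projIter_filter {l : List V} (hl : l.Nodup)
    (hQ : ∀ a b, Q a b ≠ 0 → ord a < ord b) {t : V →₀ R}
    (ht : ∀ z ∈ l, linearCombination R (Q · z) t = t z) (w : V → A) :
    linearCombination R (projIter l Q w).2 (t.filter (· ∉ l)) = linearCombination R w t := by
  induction l generalizing Q w t with
  | nil => exact congrArg _ ((filter_eq_self_iff _ t).2 fun _ _ => List.not_mem_nil)
  | cons z l ih =>
    obtain ⟨hzl, hl⟩ := List.nodup_cons.1 hl
    have hzz : Q z z = 0 := by
      by_contra h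
      exact lt_irrefl _ (hQ z z h)
    have hz : linearCombination R (Q · z) t = t z := ht z List.mem_cons_self
    have hfilter : t.filter (· ∉ z :: l) = (t.erase z).filter (· ∉ l) := by
      ext y
      by_cases hy : y = z <;> simp [filter_apply, hy]
    have ht' : ∀ u ∈ l, linearCombination R (pwStep Q z · u) (t.erase z) = t.erase z u := by
      intro u hu
      rw [erase_ne (ne_of_mem_of_not_mem hu hzl), ← ht u (List.mem_cons_of_mem z hu)]
      -- The column at `u` of `pwStep Q z` is `wStep Q (Q · u) z`.
      exact linearCombination_wStep_erase hzz hz (Q · u)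
    rw [hfilter, projIter, ih hl (lt_of_pwStep_ne_zero hQ z) ht',
      linearCombination_wStep_erase hzz hz]

end Projection

variable {G : MGraph V E} {q : E → R} {s : V → V → R} {x : V}

theorem self_mem_desc (G : MGraph V E) (x : V) : x ∈ G.desc x :=
  ⟨[], rfl⟩

theorem IsPath.concat {l : List E} {e : E} (h : G.IsPath x (G.tl e) l) :
    G.IsPath x (G.hd e) (l ++ [e]) := by
  induction l generalizing x with
  | nil => exact ⟨h.symm, rfl⟩
  | cons _ _ ih => exact ⟨h.1, ih h.2⟩

theorem mem_desc_of_mem_pa {y z : V} (hy : y ∈ G.desc x) (hyz : y ∈ G.pa z) : z ∈ G.desc x := by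
  obtain ⟨e, rfl, rfl⟩ := hyz
  obtain ⟨l, hl⟩ := hy
  exact ⟨l ++ [e], hl.concat⟩

theorem mem_pa_of_pw_ne_zero {y z : V} (h : G.pw q y z ≠ 0) : y ∈ G.pa z := by
  obtain ⟨e, he, -⟩ := exists_ne_zero_of_finsum_mem_ne_zero h
  exact ⟨e, he⟩

namespace IsTotalWeight

theorem mem_desc_of_ne_zero (hs : G.IsTotalWeight q s) {y : V} (h : s x y ≠ 0) :
    y ∈ G.desc x :=
  not_imp_comm.1 (hs.1 x y) h

theorem finsum_mul_pw (hs : G.IsTotalWeight q s) {z : V} (hz : z ≠ x) :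
    ∑ᶠ y, s x y * G.pw q y z = s x z := by
  have hsupp : support (fun y => s x y * G.pw q y z) ⊆ G.pa z :=
    fun y hy => mem_pa_of_pw_ne_zero (right_ne_zero_of_mul hy)
  by_cases hzx : z ∈ G.desc x
  · rw [hs.2.2 x z hzx hz, finsum_mem_eq_finsum_of_support_subset hsupp]
  · rw [hs.1 x z hzx]
    refine finsum_eq_zero_of_forall_eq_zero fun y => ?_
    by_contra hy
    exact hzx (mem_desc_of_mem_pa (hs.mem_desc_of_ne_zero (left_ne_zero_of_mul hy)) (hsupp hy))

theorem finsum_mem_desc (hs : G.IsTotalWeight q s) (w : V → A) :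
    ∑ᶠ y ∈ G.desc x, s x y • w y = ∑ᶠ y, s x y • w y :=
  finsum_mem_eq_finsum_of_support_subset fun _ hy =>
    hs.mem_desc_of_ne_zero (left_ne_zero_of_smul hy)

/-- The row `s(x|·)` of total path weights out of a vertex `x` with finitely many descendants, as a
finitely supported function, so that it can be paired with functions on an infinite vertex set. -/
noncomputable def row (hs : G.IsTotalWeight q s) (hx : (G.desc x).Finite) : V →₀ R :=
  ofSupportFinite (s x) (hx.subset fun _ => hs.mem_desc_of_ne_zero)

theorem linearCombination_row (hs : G.IsTotalWeight q s) (hx : (G.desc x).Finite) (w : V → A) :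
    linearCombination R w (hs.row hx) = ∑ᶠ y, s x y • w y :=
  linearCombination_eq_finsum w (hs.row hx)

theorem filter_row_eq_single (hs : G.IsTotalWeight q s) (hx : (G.desc x).Finite) {l : List V}
    (hxl : x ∉ l) (hl : G.desc x \ {x} ⊆ {z | z ∈ l}) :
    (hs.row hx).filter (· ∉ l) = single x 1 := by
  ext y
  by_cases hyx : y = x
  · simp [hyx, hxl, row, ofSupportFinite_coe, hs.2.1 x]
  · rw [single_eq_of_ne hyx, filter_apply, ite_eq_right_iff]
    exact fun hyl => hs.1 x y fun hy => hyl (hl ⟨hy, hyx⟩)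

theorem projIter_snd_apply (hs : G.IsTotalWeight q s) (hG : G.IsDAMG) {l : List V} (hl : l.Nodup)
    (hxl : x ∉ l) (hdesc : G.desc x \ {x} ⊆ {z | z ∈ l}) (w : V → A) :
    (projIter l (G.pw q) w).2 x = ∑ᶠ y, s x y • w y := by
  obtain ⟨ord, -, hord⟩ := hG
  have hpw : ∀ a b, G.pw q a b ≠ 0 → ord a < ord b := by
    intro a b h
    obtain ⟨e, rfl, rfl⟩ := mem_pa_of_pw_ne_zero h
    exact hord e
  have hx : (G.desc x).Finite := (l.finite_toSet.subset hdesc).of_sdiff (Set.finite_singleton x)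
  have hrow : ∀ z ∈ l, linearCombination R (G.pw q · z) (hs.row hx) = hs.row hx z := fun z hz =>
    (hs.linearCombination_row hx _).trans (hs.finsum_mul_pw (ne_of_mem_of_not_mem hz hxl))
  calc (projIter l (G.pw q) w).2 x
      = linearCombination R (projIter l (G.pw q) w).2 ((hs.row hx).filter (· ∉ l)) := by
        rw [hs.filter_row_eq_single hx hxl hdesc, linearCombination_single, one_smul]
    _ = linearCombination R w (hs.row hx) := linearCombination_projIter_filter hl hpw hrow w
    _ = ∑ᶠ y, s x y • w y := hs.linearCombination_row hx w

end IsTotalWeight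

end MGraph

theorem proj_synergy_total_weights_general
    {V E R A : Type*} [CommRing R] [AddCommGroup A] [Module R A]
    (G : MGraph V E) (hG : G.IsDAMG) (_hE : ∀ a b : V, (G.edges a b).Finite)
    (q : E → R) (s : V → V → R) (hs : G.IsTotalWeight q s)
    (v w : V → A) (_hw : G.IsMoebiusTransform v w)
    (x : V) (S : Set V) (hS : G.desc x ∩ S = G.desc x \ {x})
    (l : List V) (hnd : l.Nodup) (hmem : ∀ z : V, z ∈ l ↔ z ∈ S) :
    (MGraph.projIter l (G.pw q) w).2 x = (∑ᶠ y : V, s x y • w y) ∧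
    (MGraph.projIter l (G.pw q) w).2 x = (∑ᶠ y ∈ G.desc x, s x y • w y) := by
  have hxl : x ∉ l := fun hx => (hS.subset ⟨G.self_mem_desc x, (hmem x).1 hx⟩).2 rfl
  have hdesc : G.desc x \ {x} ⊆ {z | z ∈ l} := fun z hz => (hmem z).2 (hS.superset hz).2
  rw [hs.finsum_mem_desc, and_self]
  exact hs.projIter_snd_apply hG hnd hxl hdesc w

/-- **Projection of a synergy function via total path weights.**
Let `q` be a weight function on the DAMG `G` with total path weight function `s`,
`w` the Möbius transform of `v`, `x ∈ V` fixed, and `S ⊆ V` any subset with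
`Desc(x) ∩ S = Desc(x)∖{x}` (enumerated by the duplicate-free list `l`; the order
of the iterated one-element projections is immaterial). Then
`w^{∖S}(x) = Σ_{y ∈ V} s(x|y)·w(y) = Σ_{y ∈ Desc(x)} s(x|y)·w(y)`. -/
theorem proj_synergy_total_weights
    {V E R A : Type*} [Finite V] [Finite E] [CommRing R] [AddCommGroup A] [Module R A]
    (G : MGraph V E) (hG : G.IsDAMG)
    (q : E → R) (s : V → V → R) (hs : G.IsTotalWeight q s)
    (v w : V → A) (hw : G.IsMoebiusTransform v w)
    (x : V) (S : Set V) (hS : G.desc x ∩ S = G.desc x \ {x})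
    (l : List V) (hnd : l.Nodup) (hmem : ∀ z : V, z ∈ l ↔ z ∈ S) :
    (MGraph.projIter l (G.pw q) w).2 x = (∑ᶠ y : V, s x y • w y) ∧
    (MGraph.projIter l (G.pw q) w).2 x = (∑ᶠ y ∈ G.desc x, s x y • w y) :=
  proj_synergy_total_weights_general G hG (fun _ _ => Set.toFinite _) q s hs v w hw x S hS l hnd
    hmem
end

section
/- Let G = (V,E) be a DAMG, q_G : E → ℚ its path uniform weight function q_G(e) := π^G(t(e))/π^G(h(e)), and S ⊆ V∖Rt(G) a subset. Then the projection of q_G onto V∖S equals the path uniform weight function of the projected DAMG: (q_G)^{∖S} = q_{G^{∖S}} as functions on the edge set of G^{∖S}. -/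
open scoped Classical

/-!
Cutting a path of `G` at its visits to `V ∖ S` writes it uniquely as a concatenation of edges of
`G^{∖S}`, so the paths between two vertices outside `S` are equinumerous in `G` and in `G^{∖S}`.
As every vertex is reached from a root and `S` contains no root, the roots of `G^{∖S}` are those
of `G`; hence `π` agrees on `V ∖ S`. The projected weight of a path telescopes, because the
weights are quotients of the potential `π`, whose values on `S` do not vanish.
-/

namespace MGraph

section Paths

variable {V E : Type*} {G : MGraph V E} {x y z : V} {e : E} {l l₁ l₂ : List E}

theorem isPath_append :
    G.IsPath x z (l₁ ++ l₂) ↔ ∃ y, G.IsPath x y l₁ ∧ G.IsPath y z l₂ := by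
  induction l₁ generalizing x with
  | nil => simp [IsPath]
  | cons e l ih => simp [IsPath, ih, and_assoc]

theorem isPath_concat : G.IsPath x y (l ++ [e]) ↔ G.IsPath x (G.tl e) l ∧ G.hd e = y := by
  simp [isPath_append, IsPath]

theorem isPath_cons_iff_isChain :
    G.IsPath x y (e :: l) ↔
      G.tl e = x ∧ G.IsChain (e :: l) ∧ G.hd ((e :: l).getLast (List.cons_ne_nil _ _)) = y := by
  induction l generalizing x e with
  | nil => simp [IsPath, IsChain]
  | cons e' l ih =>
    rw [IsPath, ih, IsChain, List.getLast_cons_cons]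
    tauto

theorem interior_eq_map_dropLast (l : List E) : G.interior l = l.dropLast.map G.hd := by
  induction l with
  | nil => rfl
  | cons e l ih => cases l <;> simp_all [interior]

theorem IsPath.eq_nil_or_exists_eq_append_cons {S : Set V} (h : G.IsPath x y l) (hy : y ∉ S) :
    l = [] ∨ ∃ l₁ e l₂, l = l₁ ++ e :: l₂ ∧ (∀ e' ∈ l₁, G.hd e' ∈ S) ∧ G.hd e ∉ S := by
  induction l using List.reverseRecOn with
  | nil => exact Or.inl rfl
  | append_singleton l e _ =>
    obtain ⟨-, rfl⟩ := isPath_concat.mp h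
    obtain ⟨e', l₁, l₂, hl₁, he', hl, -⟩ := List.exists_of_eraseP
      (p := fun e ↦ decide (G.hd e ∉ S)) (List.mem_concat_self) (decide_eq_true hy)
    exact Or.inr ⟨l₁, e', l₂, hl, by simpa using hl₁, by simpa using he'⟩

theorem prod_map_div_of_isChain {M : Type*} [GroupWithZero M] (f : V → M)
    (hl : G.IsChain (e :: l)) (hf : ∀ v ∈ G.interior (e :: l), f v ≠ 0) :
    ((e :: l).map fun e ↦ f (G.tl e) / f (G.hd e)).prod =
      f (G.tl e) / f (G.hd ((e :: l).getLast (List.cons_ne_nil _ _))) := by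
  induction l generalizing e with
  | nil => simp
  | cons e' l ih =>
    obtain ⟨hfe, hfl⟩ := List.forall_mem_cons.mp hf
    rw [List.map_cons, List.prod_cons, ih hl.2 hfl, ← hl.1, List.getLast_cons_cons,
      div_mul_div_cancel₀ hfe]

end Paths

section Roots

variable {V E : Type*} {G : MGraph V E} {x y : V} {l : List E}

theorem hd_notMem_roots (e : E) : G.hd e ∉ G.roots := fun h ↦
  Set.notMem_empty (G.tl e) (h.subset ⟨e, rfl, rfl⟩)

theorem IsPath.eq_nil_of_mem_roots (h : G.IsPath x y l) (hy : y ∈ G.roots) : l = [] := by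
  induction l using List.reverseRecOn with
  | nil => rfl
  | append_singleton l e _ =>
    obtain ⟨-, rfl⟩ := isPath_concat.mp h
    exact absurd hy (hd_notMem_roots e)

theorem exists_mem_roots_reaches (hwf : WellFounded fun x y ↦ x ∈ G.pa y) (y : V) :
    ∃ r ∈ G.roots, G.Reaches r y := by
  induction y using hwf.induction with
  | _ y ih =>
    by_cases hy : y ∈ G.roots
    · exact ⟨y, hy, [], rfl⟩
    · obtain ⟨_, e, rfl, rfl⟩ := Set.nonempty_iff_ne_empty.mpr hy
      obtain ⟨r, hr, l, hl⟩ := ih (G.tl e) ⟨e, rfl, rfl⟩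
      exact ⟨r, hr, l ++ [e], isPath_concat.mpr ⟨hl, rfl⟩⟩

theorem IsDAMG.wellFounded_pa (hG : G.IsDAMG) : WellFounded fun x y ↦ x ∈ G.pa y := by
  obtain ⟨ord, -, h_lt⟩ := hG
  refine Subrelation.wf ?_ (measure ord).wf
  rintro _ _ ⟨e, rfl, rfl⟩
  exact h_lt e

end Roots

section Counting

variable {V E : Type*} {G : MGraph V E}

theorem finite_setOf_isPath (hwf : WellFounded fun x y ↦ x ∈ G.pa y)
    (hfin : ∀ y, (G.hd ⁻¹' {y}).Finite) (y : V) :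
    {p : V × List E | G.IsPath p.1 y p.2}.Finite := by
  induction y using hwf.induction with
  | _ y ih =>
    have hstep : (⋃ e ∈ G.hd ⁻¹' {y}, Prod.map id (· ++ [e]) ''
        {p : V × List E | G.IsPath p.1 (G.tl e) p.2}).Finite :=
      (hfin y).biUnion fun e he ↦ (ih (G.tl e) ⟨e, rfl, he⟩).image _
    refine (hstep.insert (y, [])).subset ?_
    rintro ⟨x, l⟩ (h : G.IsPath x y l)
    induction l using List.reverseRecOn with
    | nil => exact Or.inl (congrArg (·, []) h)
    | append_singleton l e _ =>
      obtain ⟨hl, he⟩ := isPath_concat.mp h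
      exact Or.inr (Set.mem_biUnion he ⟨(x, l), hl, rfl⟩)

theorem nPathsRt_pos (hwf : WellFounded fun x y ↦ x ∈ G.pa y)
    (hfin : ∀ y, (G.hd ⁻¹' {y}).Finite) (y : V) : 0 < G.nPathsRt y := by
  have hpaths := finite_setOf_isPath hwf hfin y
  have hsupp : (Function.support (G.nPaths · y) ∩ {r | r ∈ G.roots}).Finite := by
    refine (hpaths.image Prod.fst).subset ?_
    rintro x ⟨hx, -⟩
    obtain ⟨l, hl⟩ := Set.nonempty_of_ncard_ne_zero hx
    exact ⟨(x, l), hl, rfl⟩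
  obtain ⟨r, hr, l, hl⟩ := exists_mem_roots_reaches hwf y
  have hr_paths : 0 < G.nPaths r y :=
    (Set.ncard_pos (hpaths.preimage (f := Prod.mk r) (Prod.mk_right_injective r).injOn)).mpr ⟨l, hl⟩
  exact finsum_cond_pos (fun _ _ ↦ Nat.zero_le _) ⟨r, hr, hr_paths⟩ hsupp

end Counting

namespace ProjEdge

variable {V E : Type*} {G : MGraph V E} {S : Set V}

/-- The path of `G` that is collapsed to the edge `p` of `G^{∖S}`, as a list of edges. -/
def toPath (p : G.ProjEdge S) : List E := p.first :: p.rest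

theorem toPath_ne_nil (p : G.ProjEdge S) : p.toPath ≠ [] := List.cons_ne_nil _ _

theorem toPath_injective : Function.Injective (toPath : G.ProjEdge S → List E) := by
  rintro ⟨e, l, _, _, _, _⟩ ⟨e', l', _, _, _, _⟩ h
  obtain ⟨rfl, rfl⟩ := List.cons.inj h
  rfl

theorem isPath_toPath (p : G.ProjEdge S) :
    G.IsPath ((G.projG S).tl p) ((G.projG S).hd p) p.toPath :=
  isPath_cons_iff_isChain.mpr ⟨rfl, p.chain, rfl⟩

theorem takeWhile_toPath_append (p : G.ProjEdge S) (l : List E) :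
    (p.toPath ++ l).takeWhile (fun e ↦ decide (G.hd e ∈ S)) = p.toPath.dropLast := by
  have hinit : ∀ e ∈ p.toPath.dropLast, decide (G.hd e ∈ S) = true := fun e he ↦
    decide_eq_true <| p.interior_mem _ <| by
      rw [interior_eq_map_dropLast]
      exact List.mem_map_of_mem he
  have hlast : G.hd (p.toPath.getLast p.toPath_ne_nil) ∉ S := p.hd_notin
  conv_lhs => rw [← List.dropLast_concat_getLast p.toPath_ne_nil]
  simp only [List.append_assoc, List.singleton_append, List.takeWhile_append_of_pos hinit,
    List.takeWhile_cons, decide_eq_true_eq, if_neg hlast, List.append_nil]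

theorem toPath_append_inj {p p' : G.ProjEdge S} {l l' : List E}
    (h : p.toPath ++ l = p'.toPath ++ l') : p = p' ∧ l = l' := by
  have hinit : p.toPath.dropLast = p'.toPath.dropLast := by
    rw [← takeWhile_toPath_append p l, h, takeWhile_toPath_append]
  have hlength : p.toPath.length = p'.toPath.length := by
    simpa [toPath] using congrArg List.length hinit
  obtain ⟨hp, hl⟩ := List.append_inj h hlength
  exact ⟨toPath_injective hp, hl⟩

theorem exists_toPath_eq_concat {x y : {v : V // v ∉ S}} {l : List E} {e : E}
    (h : G.IsPath x y (l ++ [e])) (hl : ∀ e' ∈ l, G.hd e' ∈ S) :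
    ∃ p : G.ProjEdge S, p.toPath = l ++ [e] ∧ (G.projG S).tl p = x ∧ (G.projG S).hd p = y := by
  have hint : ∀ v ∈ G.interior (l ++ [e]), v ∈ S := by
    simpa [interior_eq_map_dropLast] using hl
  obtain ⟨e₀, l₀, h₀⟩ := List.exists_cons_of_ne_nil (List.concat_ne_nil e l)
  rw [h₀] at h hint ⊢
  obtain ⟨htl, hchain, hhd⟩ := isPath_cons_iff_isChain.mp h
  exact ⟨⟨e₀, l₀, hchain, htl ▸ x.2, hhd ▸ y.2, hint⟩, rfl, Subtype.ext htl, Subtype.ext hhd⟩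

end ProjEdge

section Projection

variable {V E : Type*} {G : MGraph V E} {S : Set V}

theorem projQ_div {K : Type*} [Field K] (f : V → K) (hf : ∀ z ∈ S, f z ≠ 0) (p : G.ProjEdge S) :
    G.projQ S (fun e ↦ f (G.tl e) / f (G.hd e)) p =
      f ((G.projG S).tl p) / f ((G.projG S).hd p) :=
  prod_map_div_of_isChain f p.chain fun v hv ↦ hf v (p.interior_mem v hv)

/-- The path of `G` that a path of `G^{∖S}`, given as a list of edges, traverses. -/
def flatten (L : List (G.ProjEdge S)) : List E := L.flatMap ProjEdge.toPath

theorem isPath_flatten {x y : {v : V // v ∉ S}} {L : List (G.ProjEdge S)}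
    (h : (G.projG S).IsPath x y L) : G.IsPath x y (flatten L) := by
  induction L generalizing x with
  | nil => exact congrArg Subtype.val h
  | cons p L ih =>
    obtain ⟨rfl, hL⟩ := h
    exact isPath_append.mpr ⟨_, p.isPath_toPath, ih hL⟩

theorem flatten_injective : Function.Injective (flatten : List (G.ProjEdge S) → List E) := by
  intro L L' h
  induction L generalizing L' with
  | nil => cases L' with
    | nil => rfl
    | cons p' L' => simp [flatten, ProjEdge.toPath_ne_nil] at h
  | cons p L ih => cases L' with
    | nil => simp [flatten, ProjEdge.toPath_ne_nil] at h
    | cons p' L' =>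
      obtain ⟨rfl, hL⟩ := ProjEdge.toPath_append_inj h
      rw [ih hL]

theorem exists_flatten_eq {x y : {v : V // v ∉ S}} {l : List E} (h : G.IsPath x y l) :
    ∃ L, (G.projG S).IsPath x y L ∧ flatten L = l := by
  obtain rfl | ⟨l₁, e, l₂, rfl, hl₁, he⟩ := h.eq_nil_or_exists_eq_append_cons y.2
  · exact ⟨[], Subtype.ext h, rfl⟩
  · rw [List.append_cons] at h
    obtain ⟨z, h₁, h₂⟩ := isPath_append.mp h
    obtain rfl := (isPath_concat.mp h₁).2
    obtain ⟨p, hp, rfl, hhd⟩ := ProjEdge.exists_toPath_eq_concat (y := ⟨_, he⟩) h₁ hl₁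
    obtain ⟨L, hL, rfl⟩ := exists_flatten_eq (x := ⟨_, he⟩) h₂
    exact ⟨p :: L, ⟨rfl, hhd ▸ hL⟩, by simp [flatten, hp]⟩
termination_by l.length

theorem bijOn_flatten (x y : {v : V // v ∉ S}) :
    Set.BijOn flatten {L | (G.projG S).IsPath x y L} {l | G.IsPath x y l} :=
  ⟨fun _ ↦ isPath_flatten, flatten_injective.injOn, fun _ ↦ exists_flatten_eq⟩

theorem nPaths_projG (x y : {v : V // v ∉ S}) : (G.projG S).nPaths x y = G.nPaths x y :=
  (bijOn_flatten x y).ncard_eq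

theorem mem_roots_projG_iff (hreach : ∀ y, ∃ r ∈ G.roots, G.Reaches r y)
    (hS : ∀ z ∈ S, z ∉ G.roots) {x : {v : V // v ∉ S}} :
    x ∈ (G.projG S).roots ↔ x.1 ∈ G.roots := by
  refine ⟨fun hx ↦ ?_, fun hx ↦ Set.eq_empty_of_forall_notMem ?_⟩
  · obtain ⟨r, hr, l, hl⟩ := hreach x
    obtain ⟨L, hL, -⟩ := exists_flatten_eq (x := ⟨r, fun h ↦ hS r h hr⟩) hl
    obtain rfl := hL.eq_nil_of_mem_roots hx
    exact congrArg Subtype.val hL ▸ hr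
  · rintro _ ⟨p, -, rfl⟩
    exact hd_notMem_roots _ hx

theorem nPathsRt_projG (hreach : ∀ y, ∃ r ∈ G.roots, G.Reaches r y)
    (hS : ∀ z ∈ S, z ∉ G.roots) (y : {v : V // v ∉ S}) :
    (G.projG S).nPathsRt y = G.nPathsRt y :=
  finsum_mem_eq_of_bijOn Subtype.val
    ⟨fun _ ↦ (mem_roots_projG_iff hreach hS).mp, Subtype.val_injective.injOn,
      fun r hr ↦ ⟨⟨r, fun h ↦ hS r h hr⟩, (mem_roots_projG_iff hreach hS).mpr hr, rfl⟩⟩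
    fun x _ ↦ nPaths_projG x y

end Projection

end MGraph

theorem path_uniform_proj_commute_general
    {V E : Type*} (G : MGraph V E)
    (hwf : WellFounded fun x y ↦ x ∈ G.pa y) (hfin : ∀ y, (G.hd ⁻¹' {y}).Finite)
    (S : Set V) (hS : ∀ z ∈ S, z ∉ G.roots) (e : G.ProjEdge S) :
    G.projQ S G.pathUniform e = (G.projG S).pathUniform e := by
  have hreach := MGraph.exists_mem_roots_reaches hwf
  have hπ : ∀ z ∈ S, (G.nPathsRt z : ℚ) ≠ 0 := fun z _ ↦
    Nat.cast_ne_zero.mpr (MGraph.nPathsRt_pos hwf hfin z).ne'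
  calc G.projQ S G.pathUniform e
    _ = G.nPathsRt ((G.projG S).tl e) / G.nPathsRt ((G.projG S).hd e) :=
      MGraph.projQ_div (fun v ↦ (G.nPathsRt v : ℚ)) hπ e
    _ = (G.projG S).pathUniform e := by
      rw [MGraph.pathUniform, MGraph.nPathsRt_projG hreach hS, MGraph.nPathsRt_projG hreach hS]

/-- **Path uniform weights commute with projections.**
For a DAMG `G` and a subset `S ⊆ V∖Rt(G)`, the projection of the path uniform
weight function `q_G` onto the complement of `S` equals the path uniform weight
function of the projected DAMG: `(q_G)^{∖S} = q_{G^{∖S}}` on the edges of `G^{∖S}`. -/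
theorem path_uniform_proj_commute
    {V E : Type*} [Finite V] [Finite E]
    (G : MGraph V E) (hG : G.IsDAMG)
    (S : Set V) (hS : ∀ z ∈ S, z ∉ G.roots) :
    ∀ e : G.ProjEdge S, G.projQ S G.pathUniform e = (G.projG S).pathUniform e :=
  path_uniform_proj_commute_general G hG.wellFounded_pa (fun _ ↦ Set.toFinite _) S hS
end
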